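/- For integers r, m ≥ 3, the number of values f with 0 ≤ f ≤ C(m,r) for which σ_r(m,f) > 0 is at most m^{r/(r−1)} (up to a constant factor); in particular, all but O(m^{r/(r−1)}) of the C(m,r) pairs (m,f) satisfy σ_r(m,f) = 0. -/

import Mathlib

open Finset
open scoped Classical

/-- `(n,e) →_r (m,f)`: every `r`-uniform hypergraph on `n` vertices with `e` edges
has an induced sub-hypergraph on `m` vertices with exactly `f` edges. -/
def PairArrows (r n e m f : ℕ) : Prop :=
  ∀ G : Finset (Finset (Fin n)), (∀ s ∈ G, s.card = r) → G.card = e →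
    ∃ S : Finset (Fin n), S.card = m ∧ (G.filter (fun t => t ⊆ S)).card = f

/-- The density `σ_r(m,f)`. -/
noncomputable def sigmaR (r m f : ℕ) : ℝ :=
  Filter.limsup
    (fun n : ℕ =>
      (((Finset.range (n.choose r + 1)).filter (fun e => PairArrows r n e m f)).card : ℝ) /
        (n.choose r : ℝ))
    Filter.atTop

/-!
For all but a vanishing proportion of the edge numbers `e`, there are two hypergraphs with `e`
edges that differ little from a clique: the largest clique with at most `e` edges, plus a few
extra edges, and the smallest clique with at least `e` edges, minus a few edges. By the deletion
method the set of added or removed edges can be chosen so sparse that any `m` vertices span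
fewer than `2m` of them. If `(n, e) →_r (m, f)`, then the first hypergraph shows that `f` exceeds
some `C(a, r)` by less than `2m`, and the second that `f` falls short of some `C(b, r)` by less
than `2m`. Unless `f` is itself one of the `m + 1` numbers `C(a, r)`, this makes
`C(b - 1, r - 1) = C(b, r) - C(b - 1, r)` less than `4m`, whence
`f ≤ C(b, r) ≤ C(b - 1, r - 1) ^ (r / (r - 1)) ≤ (4m) ^ (r / (r - 1))`.
-/

section Choose

lemma pow_mul_choose_le_choose_add {q s N : ℕ} (k : ℕ) (h : q * (s + k) ≤ N + k) :
    q ^ k * N.choose s ≤ (N + k).choose (s + k) := by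
  induction k with
  | zero => simp
  | succ k ih =>
    have ih : q ^ k * N.choose s ≤ (N + k).choose (s + k) :=
      ih (by rcases q.eq_zero_or_pos with rfl | hq <;> nlinarith)
    refine Nat.le_of_mul_le_mul_right (c := s + k + 1) ?_ (by omega)
    calc q ^ (k + 1) * N.choose s * (s + k + 1)
        = (q * (s + (k + 1))) * (q ^ k * N.choose s) := by ring
      _ ≤ (N + k + 1) * (N + k).choose (s + k) := Nat.mul_le_mul h ih
      _ = (N + k + 1).choose (s + k + 1) * (s + k + 1) := Nat.add_one_mul_choose_eq _ _

lemma add_one_pow_le_mul_choose {n k : ℕ} (h : k ≤ n) :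
    (n + 1) ^ k ≤ (k + 1) ^ k * n.choose k := by
  refine Nat.le_of_mul_le_mul_right (c := k.factorial) ?_ k.factorial_pos
  calc (n + 1) ^ k * k.factorial
      = ∏ i ∈ range k, (n + 1) * (k - i) := by
        rw [prod_mul_distrib, prod_const, card_range, ← Nat.descFactorial_eq_prod_range,
          Nat.descFactorial_self]
    _ ≤ ∏ i ∈ range k, (k + 1) * (n - i) := by
        refine prod_le_prod' fun i hi => ?_
        have hik : i ≤ k := (mem_range.mp hi).le
        zify [hik, hik.trans h]
        nlinarith
    _ = (k + 1) ^ k * n.choose k * k.factorial := by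
        rw [prod_mul_distrib, prod_const, card_range, ← Nat.descFactorial_eq_prod_range,
          Nat.descFactorial_eq_factorial_mul_choose]
        ring

lemma choose_succ_succ_pow_le (n k : ℕ) :
    (n + 1).choose (k + 1) ^ k ≤ n.choose k ^ (k + 1) := by
  rcases lt_or_ge n k with hnk | hkn
  · simp [Nat.choose_eq_zero_of_lt (Nat.succ_lt_succ hnk), (Nat.zero_le n).trans_lt hnk |>.ne']
  refine Nat.le_of_mul_le_mul_right (c := (k + 1) ^ k) ?_ (by positivity)
  calc (n + 1).choose (k + 1) ^ k * (k + 1) ^ k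
      = (n + 1) ^ k * n.choose k ^ k := by
        rw [← mul_pow, ← Nat.add_one_mul_choose_eq, mul_pow]
    _ ≤ (k + 1) ^ k * n.choose k * n.choose k ^ k :=
        Nat.mul_le_mul_right _ (add_one_pow_le_mul_choose hkn)
    _ = n.choose k ^ (k + 1) * (k + 1) ^ k := by ring

lemma choose_succ_succ_le_rpow (n : ℕ) {k : ℕ} (hk : k ≠ 0) :
    ((n + 1).choose (k + 1) : ℝ) ≤ (n.choose k : ℝ) ^ (((k : ℝ) + 1) / k) := by
  have hk' : (k : ℝ) ≠ 0 := Nat.cast_ne_zero.mpr hk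
  refine le_of_pow_le_pow_left₀ hk (by positivity) ?_
  calc ((n + 1).choose (k + 1) : ℝ) ^ k ≤ (n.choose k : ℝ) ^ (k + 1) :=
        mod_cast choose_succ_succ_pow_le n k
    _ = ((n.choose k : ℝ) ^ (((k : ℝ) + 1) / k)) ^ k := by
        rw [← Real.rpow_mul_natCast (Nat.cast_nonneg _), div_mul_cancel₀ _ hk']
        norm_cast

lemma exists_choose_le_lt_choose_succ {n r e : ℕ} (he : e < n.choose (r + 1)) :
    ∃ x < n, x.choose (r + 1) ≤ e ∧ e < (x + 1).choose (r + 1) := by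
  induction n with
  | zero => simp at he
  | succ n ih =>
    rcases lt_or_ge e (n.choose (r + 1)) with h | h
    · obtain ⟨x, hxn, hx⟩ := ih h
      exact ⟨x, hxn.trans n.lt_succ_self, hx⟩
    · exact ⟨n, n.lt_succ_self, h, he⟩

end Choose

section Deletion

variable {α : Type*}

lemma pow_card_mul_card_filter_superset_le {q s : ℕ} {T : Finset α} (hT : q * s ≤ #T)
    (K : Finset α) :
    q ^ #K * #{U ∈ powersetCard s T | K ⊆ U} ≤ (#T).choose s := by
  rcases eq_empty_or_nonempty {U ∈ powersetCard s T | K ⊆ U} with hempty | ⟨U, hU⟩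
  · simp [hempty]
  simp only [mem_filter, mem_powersetCard] at hU
  have hKT : K ⊆ T := hU.2.trans hU.1.1
  have hKs : #K ≤ s := hU.1.2 ▸ card_le_card hU.2
  have hcount : #{U ∈ powersetCard s T | K ⊆ U} ≤ (#T - #K).choose (s - #K) := by
    rw [← card_sdiff_of_subset hKT, ← card_powersetCard]
    refine card_le_card_of_injOn (· \ K) (fun U hU => ?_)
      fun U hU U' hU' (hUU' : U \ K = U' \ K) => ?_
    · rw [mem_coe, mem_filter, mem_powersetCard] at hU
      rw [mem_coe, mem_powersetCard, card_sdiff_of_subset hU.2, hU.1.2]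
      exact ⟨sdiff_subset_sdiff hU.1.1 subset_rfl, rfl⟩
    · rw [← sdiff_union_of_subset (mem_filter.mp hU).2, hUU',
        sdiff_union_of_subset (mem_filter.mp hU').2]
  calc q ^ #K * #{U ∈ powersetCard s T | K ⊆ U}
      ≤ q ^ #K * (#T - #K).choose (s - #K) := Nat.mul_le_mul_left _ hcount
    _ ≤ (#T - #K + #K).choose (s - #K + #K) := pow_mul_choose_le_choose_add _ (by
        rwa [Nat.sub_add_cancel hKs, Nat.sub_add_cancel (card_le_card hKT)])
    _ = (#T).choose s := by rw [Nat.sub_add_cancel hKs, Nat.sub_add_cancel (card_le_card hKT)]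

lemma exists_powersetCard_card_filter_subset_le {q k s D : ℕ} (hq : 0 < q) {T : Finset α}
    {B : Finset (Finset α)} (hB : (B : Set (Finset α)).Sized k) (hBD : #B ≤ D * q ^ k)
    (hT : q * s ≤ #T) : ∃ U ∈ powersetCard s T, #{K ∈ B | K ⊆ U} ≤ D := by
  by_contra! hmany
  set P := powersetCard s T
  have hP : #P = (#T).choose s := card_powersetCard s T
  have hP_pos : 0 < #P :=
    hP ▸ Nat.choose_pos ((Nat.le_mul_of_pos_left s hq).trans hT)
  have hdouble : (D + 1) * #P ≤ D * #P := by
    calc (D + 1) * #P ≤ ∑ U ∈ P, #{K ∈ B | K ⊆ U} := by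
          rw [mul_comm]; exact card_nsmul_le_sum P _ (D + 1) hmany
      _ = ∑ K ∈ B, #{U ∈ P | K ⊆ U} := by
          simp only [card_filter]; exact sum_comm
      _ ≤ D * #P := by
          refine Nat.le_of_mul_le_mul_left (c := q ^ k) ?_ (by positivity)
          calc q ^ k * ∑ K ∈ B, #{U ∈ P | K ⊆ U}
              = ∑ K ∈ B, q ^ #K * #{U ∈ P | K ⊆ U} := by
                rw [mul_sum]; exact sum_congr rfl fun K hK => by rw [hB hK]
            _ ≤ #B * #P := sum_le_card_nsmul B _ _ fun K _ =>
                hP ▸ pow_card_mul_card_filter_superset_le hT K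
            _ ≤ D * q ^ k * #P := Nat.mul_le_mul_right _ hBD
            _ = q ^ k * (D * #P) := by ring
  nlinarith

lemma exists_hittingSet_card_le {B : Finset (Finset α)} (hB : ∀ K ∈ B, K.Nonempty) :
    ∃ R : Finset α, #R ≤ #B ∧ ∀ K ∈ B, ∃ x ∈ K, x ∈ R := by
  choose g hg using hB
  refine ⟨B.attach.image fun K => g K.1 K.2, card_image_le.trans_eq card_attach, fun K hK => ?_⟩
  exact ⟨g K hK, hg K hK, mem_image_of_mem _ (mem_attach B ⟨K, hK⟩)⟩

-- A random `(M + D)`-subset of `T` contains on average at most `D` members of `B`; remove one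
-- element of each.
theorem exists_subset_card_eq_forall_not_subset {q k D M : ℕ} (hq : 0 < q) (hk : k ≠ 0)
    {T : Finset α} {B : Finset (Finset α)} (hB : (B : Set (Finset α)).Sized k)
    (hBD : #B ≤ D * q ^ k) (hT : q * (M + D) ≤ #T) :
    ∃ H ⊆ T, #H = M ∧ ∀ K ∈ B, ¬ K ⊆ H := by
  obtain ⟨U, hU, hUD⟩ := exists_powersetCard_card_filter_subset_le hq hB hBD hT
  obtain ⟨hUT, hUcard⟩ := mem_powersetCard.mp hU
  obtain ⟨R, hRcard, hR⟩ := exists_hittingSet_card_le (B := {K ∈ B | K ⊆ U})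
    fun K hK => card_ne_zero.mp ((hB (mem_filter.mp hK).1).trans_ne hk)
  have hM : M ≤ #(U \ R) := by
    have := le_card_sdiff R U
    omega
  obtain ⟨H, hHU, hHcard⟩ := exists_subset_card_eq hM
  refine ⟨H, (hHU.trans sdiff_subset).trans hUT, hHcard, fun K hK hKH => ?_⟩
  obtain ⟨x, hxK, hxR⟩ := hR K (mem_filter.mpr ⟨hK, (hKH.trans hHU).trans sdiff_subset⟩)
  exact (mem_sdiff.mp (hHU (hKH hxK))).2 hxR

end Deletion

section Hypergraph

variable {V : Type*} [DecidableEq V]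

/-- The hypergraph with edge set `H` is locally sparse: any `m` vertices span fewer than `k`
edges. -/
def LocallySparse (m k : ℕ) (H : Finset (Finset V)) : Prop :=
  ∀ S : Finset V, #S = m → #{t ∈ H | t ⊆ S} < k

/-- The configurations that a locally sparse `r`-uniform hypergraph must avoid: sets of `k` edges
spanned by `m` vertices. -/
def denseConfigurations (V : Type*) [Fintype V] [DecidableEq V] (r m k : ℕ) :
    Finset (Finset (Finset V)) :=
  (powersetCard m univ).biUnion fun S => powersetCard k (powersetCard r S)

lemma mem_denseConfigurations [Fintype V] {r m k : ℕ} {K : Finset (Finset V)} :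
    K ∈ denseConfigurations V r m k ↔
      ∃ S : Finset V, #S = m ∧ K ⊆ powersetCard r S ∧ #K = k := by
  simp [denseConfigurations, mem_powersetCard]

lemma card_denseConfigurations_le [Fintype V] (r m k : ℕ) :
    #(denseConfigurations V r m k) ≤ (m.choose r).choose k * Fintype.card V ^ m := by
  calc #(denseConfigurations V r m k)
      ≤ #(powersetCard m (univ : Finset V)) * (m.choose r).choose k :=
        card_biUnion_le_card_mul _ _ _ fun S hS => by
          rw [card_powersetCard, card_powersetCard, (mem_powersetCard.mp hS).2]
    _ ≤ Fintype.card V ^ m * (m.choose r).choose k := by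
        rw [card_powersetCard, card_univ]
        exact Nat.mul_le_mul_right _ (Nat.choose_le_pow _ m)
    _ = (m.choose r).choose k * Fintype.card V ^ m := mul_comm _ _

lemma locallySparse_of_forall_denseConfigurations [Fintype V] {r m k : ℕ} {H : Finset (Finset V)}
    (hH : (H : Set (Finset V)).Sized r) (h : ∀ K ∈ denseConfigurations V r m k, ¬ K ⊆ H) :
    LocallySparse m k H := by
  intro S hS
  by_contra! hk
  obtain ⟨K, hKS, hKk⟩ := exists_subset_card_eq hk
  refine h K (mem_denseConfigurations.mpr ⟨S, hS, fun t ht => ?_, hKk⟩)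
    (hKS.trans (filter_subset _ _))
  obtain ⟨htH, htS⟩ := mem_filter.mp (hKS ht)
  exact mem_powersetCard.mpr ⟨htS, hH htH⟩

theorem exists_locallySparse_subset [Fintype V] {r m k q M : ℕ} (hq : 0 < q) (hk : k ≠ 0)
    (hqk : Fintype.card V ^ m ≤ q ^ k) {T : Finset (Finset V)}
    (hTr : (T : Set (Finset V)).Sized r) (hT : q * (M + (m.choose r).choose k) ≤ #T) :
    ∃ H ⊆ T, #H = M ∧ LocallySparse m k H := by
  have hsized : (denseConfigurations V r m k : Set (Finset (Finset V))).Sized k := fun K hK =>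
    let ⟨_, _, _, hKk⟩ := mem_denseConfigurations.mp hK
    hKk
  obtain ⟨H, hHT, hHM, hH⟩ := exists_subset_card_eq_forall_not_subset hq hk hsized
    ((card_denseConfigurations_le r m k).trans (Nat.mul_le_mul_left _ hqk)) hT
  exact ⟨H, hHT, hHM, locallySparse_of_forall_denseConfigurations (hTr.mono hHT) hH⟩

lemma filter_subset_powersetCard (r : ℕ) (A S : Finset V) :
    {t ∈ powersetCard r A | t ⊆ S} = powersetCard r (A ∩ S) := by
  ext t
  simp only [mem_filter, mem_powersetCard, subset_inter_iff]
  tauto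

end Hypergraph

/-- `f` is less than `k` above (or equal to) a binomial coefficient `C(a, r)` with `a ≤ m`, and
less than `k` below (or equal to) another one. Edge numbers `f` of positive density have this
property with `k = 2m`. -/
def NearChoose (r m k f : ℕ) : Prop :=
  (∃ a ≤ m, a.choose r ≤ f ∧ f < a.choose r + k) ∧
    ∃ b ≤ m, f ≤ b.choose r ∧ b.choose r < f + k

namespace NearChoose

lemma eq_choose_or_exists_le_choose {r m k f : ℕ} (h : NearChoose (r + 1) m k f) :
    (∃ a ≤ m, a.choose (r + 1) = f) ∨
      ∃ c, f ≤ (c + 1).choose (r + 1) ∧ c.choose r ≤ 2 * k := by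
  obtain ⟨⟨a, ham, haf, hfa⟩, b, -, hfb, hbf⟩ := h
  rcases le_or_gt b a with hba | hab
  · exact .inl ⟨a, ham, haf.antisymm (hfb.trans (Nat.choose_le_choose _ hba))⟩
  · obtain ⟨c, rfl⟩ := Nat.exists_eq_add_one_of_ne_zero (Nat.ne_zero_of_lt hab)
    refine .inr ⟨c, hfb, ?_⟩
    have hac : a.choose (r + 1) ≤ c.choose (r + 1) :=
      Nat.choose_le_choose _ (Nat.lt_succ_iff.mp hab)
    have hpascal : (c + 1).choose (r + 1) = c.choose r + c.choose (r + 1) :=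
      Nat.choose_succ_succ c r
    omega

lemma eq_choose_or_le_rpow {r m k f : ℕ} (hr : r ≠ 0) (h : NearChoose (r + 1) m k f) :
    (∃ a ≤ m, a.choose (r + 1) = f) ∨ (f : ℝ) ≤ (2 * k : ℝ) ^ (((r : ℝ) + 1) / r) := by
  refine h.eq_choose_or_exists_le_choose.imp_right fun ⟨c, hfc, hck⟩ => ?_
  calc (f : ℝ) ≤ ((c + 1).choose (r + 1) : ℝ) := mod_cast hfc
    _ ≤ (c.choose r : ℝ) ^ (((r : ℝ) + 1) / r) := choose_succ_succ_le_rpow c hr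
    _ ≤ (2 * k : ℝ) ^ (((r : ℝ) + 1) / r) := by
        gcongr
        exact_mod_cast hck

lemma card_filter_le (r m k N : ℕ) (hr : r ≠ 0) :
    (#{f ∈ range N | NearChoose (r + 1) m k f} : ℝ) ≤
      m + 2 + (2 * k : ℝ) ^ (((r : ℝ) + 1) / r) := by
  set X : ℝ := (2 * k : ℝ) ^ (((r : ℝ) + 1) / r)
  have hsub : {f ∈ range N | NearChoose (r + 1) m k f} ⊆
      (range (m + 1)).image (fun a => a.choose (r + 1)) ∪ range (⌊X⌋₊ + 1) := by
    intro f hf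
    rw [mem_union, mem_image, mem_range, Nat.lt_succ_iff]
    refine ((mem_filter.mp hf).2.eq_choose_or_le_rpow hr).imp ?_ Nat.le_floor
    exact fun ⟨a, ham, haf⟩ => ⟨a, mem_range_succ_iff.mpr ham, haf⟩
  have hcard : #{f ∈ range N | NearChoose (r + 1) m k f} ≤ (m + 1) + (⌊X⌋₊ + 1) := by
    calc #{f ∈ range N | NearChoose (r + 1) m k f}
        ≤ #((range (m + 1)).image fun a => a.choose (r + 1)) + #(range (⌊X⌋₊ + 1)) :=
          (card_le_card hsub).trans (card_union_le _ _)
      _ ≤ (m + 1) + (⌊X⌋₊ + 1) := by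
          rw [card_range]
          exact Nat.add_le_add_right (card_image_le.trans_eq (card_range _)) _
  have hfloor : (⌊X⌋₊ : ℝ) ≤ X := Nat.floor_le (by positivity)
  have hcard' : (#{f ∈ range N | NearChoose (r + 1) m k f} : ℝ) ≤ (m + 1) + (⌊X⌋₊ + 1) :=
    mod_cast hcard
  linarith

end NearChoose

/-- The distance that an edge number must keep from `0` and from `C(n, r + 1)` for the two
approximations by cliques to exist in uniformity `r + 1`. The gap between consecutive cliques is
at most `C(n, r)` edges, and keeping one edge in `√n + 1` destroys all but a few of the at most
`C(C(m, r + 1), 2m) * n ^ m` dense configurations. -/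
def edgeMargin (r m n : ℕ) : ℕ :=
  (n.sqrt + 1) * (n.choose r + (m.choose (r + 1)).choose (2 * m))

lemma exists_locallySparse_subset_of_edgeMargin_le {r m n M : ℕ} (hm : m ≠ 0)
    (hM : M ≤ n.choose r) {T : Finset (Finset (Fin n))}
    (hTr : (T : Set (Finset (Fin n))).Sized (r + 1)) (hT : edgeMargin r m n ≤ #T) :
    ∃ H ⊆ T, #H = M ∧ LocallySparse m (2 * m) H := by
  have hpow : Fintype.card (Fin n) ^ m ≤ (n.sqrt + 1) ^ (2 * m) := by
    rw [Fintype.card_fin, pow_mul]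
    exact Nat.pow_le_pow_left (Nat.lt_succ_sqrt' n).le m
  exact exists_locallySparse_subset n.sqrt.succ_pos (by omega) hpow hTr
    ((Nat.mul_le_mul_left _ (Nat.add_le_add_right hM _)).trans hT)

namespace PairArrows

variable {r n e m f k : ℕ}

lemma exists_choose_le_lt (h : PairArrows r n e m f) {A : Finset (Fin n)}
    {H : Finset (Finset (Fin n))} (hHr : (H : Set (Finset (Fin n))).Sized r)
    (hAH : Disjoint (powersetCard r A) H) (hH : LocallySparse m k H)
    (he : (#A).choose r + #H = e) : ∃ a ≤ m, a.choose r ≤ f ∧ f < a.choose r + k := by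
  have hsized : ∀ s ∈ powersetCard r A ∪ H, #s = r := fun s hs =>
    (mem_union.mp hs).elim (fun hs => (mem_powersetCard.mp hs).2) fun hs => hHr hs
  obtain ⟨S, hSm, hSf⟩ := h _ hsized (by rw [card_union_of_disjoint hAH, card_powersetCard, he])
  rw [filter_union, card_union_of_disjoint (disjoint_filter_filter hAH),
    filter_subset_powersetCard, card_powersetCard] at hSf
  have hsparse := hH S hSm
  exact ⟨#(A ∩ S), hSm ▸ card_le_card inter_subset_right, by omega, by omega⟩

lemma exists_le_choose_lt (h : PairArrows r n e m f) {A : Finset (Fin n)}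
    {H : Finset (Finset (Fin n))} (hHA : H ⊆ powersetCard r A) (hH : LocallySparse m k H)
    (he : e + #H = (#A).choose r) : ∃ b ≤ m, f ≤ b.choose r ∧ b.choose r < f + k := by
  have hsized : ∀ s ∈ powersetCard r A \ H, #s = r := fun s hs =>
    (mem_powersetCard.mp (mem_sdiff.mp hs).1).2
  obtain ⟨S, hSm, hSf⟩ := h _ hsized (by
    rw [card_sdiff_of_subset hHA, card_powersetCard, ← he, Nat.add_sub_cancel])
  have hsplit : (#(A ∩ S)).choose r = f + #{t ∈ H | t ⊆ S} := by
    rw [← card_powersetCard, ← filter_subset_powersetCard, ← sdiff_union_of_subset hHA,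
      filter_union, card_union_of_disjoint (disjoint_filter_filter sdiff_disjoint), hSf]
  have hsparse := hH S hSm
  exact ⟨#(A ∩ S), hSm ▸ card_le_card inter_subset_right, by omega, by omega⟩

theorem nearChoose (h : PairArrows (r + 1) n e m f) (hm : m ≠ 0) (hn : r ≤ n)
    (hlo : edgeMargin r m n ≤ e) (hhi : e + edgeMargin r m n ≤ n.choose (r + 1)) :
    NearChoose (r + 1) m (2 * m) f := by
  have hmargin_pos : 0 < edgeMargin r m n :=
    Nat.mul_pos n.sqrt.succ_pos (Nat.add_pos_left (Nat.choose_pos hn) _)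
  obtain ⟨x, hxn, hxe, hex⟩ : ∃ x < n, x.choose (r + 1) ≤ e ∧ e < (x + 1).choose (r + 1) :=
    exists_choose_le_lt_choose_succ (by omega)
  have hgap : (x + 1).choose (r + 1) ≤ x.choose (r + 1) + n.choose r := by
    rw [Nat.choose_succ_succ, add_comm]
    exact Nat.add_le_add_left (Nat.choose_le_choose r hxn.le) _
  constructor
  · obtain ⟨A, -, hA⟩ := exists_subset_card_eq (s := (univ : Finset (Fin n))) (n := x)
      (by simpa using hxn.le)
    have hcard : #(powersetCard (r + 1) univ \ powersetCard (r + 1) A) =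
        n.choose (r + 1) - x.choose (r + 1) := by
      rw [card_sdiff_of_subset (powersetCard_mono (subset_univ A))]
      simp [hA]
    obtain ⟨H, hHT, hHe, hH⟩ := exists_locallySparse_subset_of_edgeMargin_le hm
      (M := e - x.choose (r + 1))
      (T := powersetCard (r + 1) univ \ powersetCard (r + 1) A) (by omega)
      (fun t ht => (mem_powersetCard.mp (mem_sdiff.mp ht).1).2) (by omega)
    exact h.exists_choose_le_lt (fun t ht => (mem_powersetCard.mp (mem_sdiff.mp (hHT ht)).1).2)
      (disjoint_sdiff.mono_right hHT) hH (by rw [hA]; omega)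
  · obtain ⟨A, -, hA⟩ := exists_subset_card_eq (s := (univ : Finset (Fin n))) (n := x + 1)
      (by simpa using hxn)
    have hcard : #(powersetCard (r + 1) A) = (x + 1).choose (r + 1) := by
      rw [card_powersetCard, hA]
    obtain ⟨H, hHT, hHe, hH⟩ := exists_locallySparse_subset_of_edgeMargin_le hm
      (M := (x + 1).choose (r + 1) - e)
      (T := powersetCard (r + 1) A) (by omega) (fun t ht => (mem_powersetCard.mp ht).2) (by omega)
    exact h.exists_le_choose_lt hHT hH (by rw [hA]; omega)

lemma card_filter_le_of_not_nearChoose (hm : m ≠ 0) (hn : r ≤ n)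
    (hf : ¬ NearChoose (r + 1) m (2 * m) f) :
    #{e ∈ range (n.choose (r + 1) + 1) | PairArrows (r + 1) n e m f} ≤
      2 * edgeMargin r m n := by
  set w := edgeMargin r m n
  have hsub : {e ∈ range (n.choose (r + 1) + 1) | PairArrows (r + 1) n e m f} ⊆
      range w ∪ (range w).image (n.choose (r + 1) - ·) := by
    intro e he
    obtain ⟨he_le, harrows⟩ := mem_filter.mp he
    rw [mem_range] at he_le
    rw [mem_union, mem_range, mem_image]
    by_contra! hfar
    have hhi : w ≤ n.choose (r + 1) - e := by
      by_contra! hlt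
      exact hfar.2 _ (mem_range.mpr hlt) (by omega)
    exact hf (harrows.nearChoose hm hn hfar.1 (by omega))
  calc #{e ∈ range (n.choose (r + 1) + 1) | PairArrows (r + 1) n e m f}
      ≤ #(range w) + #((range w).image (n.choose (r + 1) - ·)) :=
        (card_le_card hsub).trans (card_union_le _ _)
    _ ≤ #(range w) + #(range w) := Nat.add_le_add_left card_image_le _
    _ = 2 * w := by rw [card_range, two_mul]

end PairArrows

section Density

open Filter Asymptotics

lemma isLittleO_sqrt_add_one :
    (fun n : ℕ => (n.sqrt : ℝ) + 1) =o[atTop] (fun n : ℕ => (n : ℝ)) := by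
  have hsqrt : (fun n : ℕ => √(n : ℝ)) =o[atTop] (fun n : ℕ => (n : ℝ)) := by
    simpa [Function.comp_def] using (isLittleO_pow_pow_atTop_of_lt (𝕜 := ℝ) one_lt_two).comp_tendsto
      (Real.tendsto_sqrt_atTop.comp tendsto_natCast_atTop_atTop)
  have hnat : (fun n : ℕ => (n.sqrt : ℝ)) =O[atTop] (fun n : ℕ => √(n : ℝ)) :=
    .of_norm_le fun n => by simpa using Real.nat_sqrt_le_real_sqrt
  exact (hnat.trans_isLittleO hsqrt).add
    ((isLittleO_const_id_atTop (1 : ℝ)).comp_tendsto tendsto_natCast_atTop_atTop)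

lemma isLittleO_edgeMargin (r m : ℕ) :
    (fun n : ℕ => (edgeMargin r m n : ℝ)) =o[atTop] (fun n : ℕ => (n.choose (r + 1) : ℝ)) := by
  have hconst (D : ℝ) : (fun _ : ℕ => D) =O[atTop] (fun n : ℕ => (n : ℝ) ^ r) := by
    refine (isBigO_const_one ℝ D atTop).trans (.of_bound' ?_)
    filter_upwards [eventually_ge_atTop 1] with n hn
    simpa using one_le_pow₀ (Nat.one_le_cast.mpr hn : (1 : ℝ) ≤ n)
  have hmargin : (fun n : ℕ => (edgeMargin r m n : ℝ)) =o[atTop]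
      (fun n : ℕ => (n : ℝ) * (n : ℝ) ^ r) := by
    simpa [edgeMargin] using
      isLittleO_sqrt_add_one.mul_isBigO ((isTheta_choose r).1.add (hconst _))
  simp only [← pow_succ'] at hmargin
  exact hmargin.trans_isTheta (isTheta_choose (r + 1)).symm

theorem sigmaR_eq_zero_of_not_nearChoose {r m f : ℕ} (hm : m ≠ 0)
    (hf : ¬ NearChoose (r + 1) m (2 * m) f) : sigmaR (r + 1) m f = 0 := by
  refine Tendsto.limsup_eq (squeeze_zero' (.of_forall fun n => by positivity) ?_
    ((isLittleO_edgeMargin r m).const_mul_left 2).tendsto_div_nhds_zero)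
  filter_upwards [eventually_ge_atTop r] with n hn
  gcongr
  exact_mod_cast PairArrows.card_filter_le_of_not_nearChoose hm hn hf

end Density

theorem few_pairs_of_positive_density_general {r m : ℕ} (hr : 2 ≤ r) (hm : 1 ≤ m) :
    (#{f ∈ range (m.choose r + 1) | 0 < sigmaR r m f} : ℝ) ≤
      19 * (m : ℝ) ^ ((r : ℝ) / ((r : ℝ) - 1)) := by
  obtain ⟨s, rfl⟩ := Nat.exists_eq_add_of_le' (one_le_two.trans hr)
  have hs : (1 : ℝ) ≤ s := mod_cast (by omega : 1 ≤ s)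
  have hm' : (1 : ℝ) ≤ m := mod_cast hm
  have hp : ((s + 1 : ℕ) : ℝ) / ((s + 1 : ℕ) - 1) = ((s : ℝ) + 1) / s := by simp
  set p : ℝ := ((s : ℝ) + 1) / s
  have hp1 : 1 ≤ p := (one_le_div (by linarith)).mpr (by linarith)
  have hp2 : p ≤ 2 := (div_le_iff₀ (by linarith)).mpr (by linarith)
  have hmp : (m : ℝ) ≤ (m : ℝ) ^ p := Real.self_le_rpow_of_one_le hm' hp1
  have h4m : (2 * (2 * m : ℕ) : ℝ) ^ p ≤ 16 * (m : ℝ) ^ p := by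
    calc (2 * (2 * m : ℕ) : ℝ) ^ p = 4 ^ p * (m : ℝ) ^ p := by
          rw [← Real.mul_rpow (by norm_num) (by positivity)]; push_cast; ring_nf
      _ ≤ 4 ^ (2 : ℝ) * (m : ℝ) ^ p := by gcongr; norm_num
      _ = 16 * (m : ℝ) ^ p := by norm_num
  have hnear : #{f ∈ range (m.choose (s + 1) + 1) | 0 < sigmaR (s + 1) m f} ≤
      #{f ∈ range (m.choose (s + 1) + 1) | NearChoose (s + 1) m (2 * m) f} :=
    card_le_card <| monotone_filter_right _ fun f _ hf =>
      not_not.mp fun hfar => hf.ne' (sigmaR_eq_zero_of_not_nearChoose (by omega) hfar)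
  rw [hp]
  calc (#{f ∈ range (m.choose (s + 1) + 1) | 0 < sigmaR (s + 1) m f} : ℝ)
      ≤ #{f ∈ range (m.choose (s + 1) + 1) | NearChoose (s + 1) m (2 * m) f} := mod_cast hnear
    _ ≤ m + 2 + (2 * (2 * m : ℕ) : ℝ) ^ p := NearChoose.card_filter_le s m (2 * m) _ (by omega)
    _ ≤ 19 * (m : ℝ) ^ p := by linarith

/-- All but `O(m^{r/(r-1)})` of the pairs `(m,f)` satisfy `σ_r(m,f) = 0`. -/
theorem few_pairs_of_positive_density :
    ∃ C : ℝ, 0 < C ∧ ∀ r m : ℕ, 3 ≤ r → 3 ≤ m →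
      (((Finset.range (m.choose r + 1)).filter (fun f => 0 < sigmaR r m f)).card : ℝ) ≤
        C * (m : ℝ) ^ ((r : ℝ) / ((r : ℝ) - 1)) :=
  ⟨19, by norm_num, fun _ _ hr hm =>
    few_pairs_of_positive_density_general (by omega) (by omega)⟩
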